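/- If the real 4×4 matrix r belongs to the polytope 𝒫_s, then the 16×16 matrix ρ = Σ_{i,j} r_{ij} Π_i⊗Π_j (first Bell projector on qubits A'B', second on A''B'') is separable across the partition A=(A',A''), B=(B',B''). -/

import Mathlib

open Matrix Complex
open scoped Kronecker ComplexOrder

noncomputable section
namespace Paper

abbrev Q2 := Fin 2 × Fin 2
abbrev M4 := Matrix Q2 Q2 ℂ
abbrev M16 := Matrix (Q2 × Q2) (Q2 × Q2) ℂ

/-- `1/√2` as a complex number. -/
def invSqrt2 : ℂ := ((Real.sqrt 2)⁻¹ : ℝ)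

/-- The four Bell states `|Φ₁⟩,…,|Φ₄⟩` as vectors in `ℂ²⊗ℂ²`
(product basis indexed by `Fin 2 × Fin 2`). -/
def bell : Fin 4 → Q2 → ℂ :=
  ![fun p => !![invSqrt2, 0; 0, invSqrt2] p.1 p.2,
    fun p => !![invSqrt2, 0; 0, -invSqrt2] p.1 p.2,
    fun p => !![0, invSqrt2; invSqrt2, 0] p.1 p.2,
    fun p => !![0, invSqrt2; -invSqrt2, 0] p.1 p.2]

/-- The Bell projectors `Π_i = |Φ_i⟩⟨Φ_i|`. -/
def BellProj (i : Fin 4) : M4 := vecMulVec (bell i) (star (bell i))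

/-- The Pauli matrices `σ_x, σ_y, σ_z`. -/
def pauli : Fin 3 → Matrix (Fin 2) (Fin 2) ℂ :=
  ![!![0, 1; 1, 0], !![0, -I; I, 0], !![1, 0; 0, -1]]

/-- Reindexing `((a',b'),(a'',b'')) ↦ ((a',a''),(b',b''))`. -/
def swapMid : (Q2 × Q2) ≃ (Q2 × Q2) where
  toFun p := ((p.1.1, p.2.1), (p.1.2, p.2.2))
  invFun p := ((p.1.1, p.2.1), (p.1.2, p.2.2))
  left_inv _ := rfl
  right_inv _ := rfl

/-- The rank-one matrix `x x†`. -/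
def pureMat {d : Type*} (x : d → ℂ) : Matrix d d ℂ := vecMulVec x (star x)

/-- Separability of a 16×16 four-qubit matrix (qubit order A',B',A'',B'')
across the partition A = (A',A''), B = (B',B''). -/
def SepAB (ρ : M16) : Prop :=
  ∃ (n : ℕ) (x y : Fin n → Q2 → ℂ),
    (Matrix.reindex swapMid swapMid ρ) = ∑ k, (pureMat (x k)) ⊗ₖ (pureMat (y k))


/-- The matrix `D₀ = (1/4)·I₄`. -/
def D0 : Matrix (Fin 4) (Fin 4) ℝ := (1 / 4 : ℝ) • 1

/-- The matrix `G₀` with entries `1/4` for `i,j ∈ {1,2}` and `0` otherwise. -/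
def G0 : Matrix (Fin 4) (Fin 4) ℝ :=
  !![1/4, 1/4, 0, 0; 1/4, 1/4, 0, 0; 0, 0, 0, 0; 0, 0, 0, 0]

/-- The polytope `𝒫_s`: the convex hull of all matrices obtained from `D₀` or `G₀`
by independently permuting rows and columns. -/
def Ps : Set (Matrix (Fin 4) (Fin 4) ℝ) :=
  convexHull ℝ
    {M | ∃ σ τ : Equiv.Perm (Fin 4),
      (M = fun i j => D0 (σ i) (τ j)) ∨ (M = fun i j => G0 (σ i) (τ j))}

/-!
The matrices `r` with `ρ` separable form a convex set, so only the vertices of `𝒫_s` matter.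
Local unitaries (phase and Hadamard gates) permute the Bell states of each pair arbitrarily up to
phases, so row and column permutations preserve separability and it remains to treat `D₀` and `G₀`.
For `D₀`, the Pauli expansion of the Bell projectors gives
`∑ᵢ Πᵢ ⊗ Πᵢ = (1/4) ∑_μ σ_μ ⊗ σ_μ ⊗ σ_μ ⊗ σ_μ`, which is symmetric in the four qubits: regrouped as
`A'A'' | B'B''` it is again `∑ᵢ Πᵢ ⊗ Πᵢ`, now a sum of product projectors. For `G₀`,
`Π₁ + Π₂ = |00⟩⟨00| + |11⟩⟨11|` is separable, hence so is its tensor square.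
-/

section PureMat

variable {d e : Type*}

lemma pureMat_smul (c : ℂ) (x : d → ℂ) : pureMat (c • x) = (‖c‖ ^ 2) • pureMat x := by
  ext i j
  have hc : c * star c = ((‖c‖ ^ 2 : ℝ) : ℂ) := by
    rw [RCLike.star_def, Complex.mul_conj']
    norm_cast
  simp only [pureMat, vecMulVec_apply, Pi.smul_apply, Pi.star_apply, smul_eq_mul, star_mul',
    Matrix.smul_apply, Complex.real_smul]
  rw [← hc]
  ring

lemma pureMat_sqrt_smul {c : ℝ} (hc : 0 ≤ c) (x : d → ℂ) :
    pureMat ((√c : ℂ) • x) = c • pureMat x := by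
  rw [pureMat_smul, Complex.norm_real, Real.norm_of_nonneg (Real.sqrt_nonneg c), Real.sq_sqrt hc]

lemma pureMat_mulVec [Fintype d] (A : Matrix e d ℂ) (x : d → ℂ) :
    pureMat (A *ᵥ x) = A * pureMat x * Aᴴ := by
  simp only [pureMat, mul_vecMulVec, vecMulVec_mul, star_mulVec]

lemma pureMat_kronecker_pureMat (x : d → ℂ) (y : e → ℂ) :
    pureMat x ⊗ₖ pureMat y = pureMat fun p => x p.1 * y p.2 := by
  ext p q
  simp only [pureMat, kroneckerMap_apply, vecMulVec_apply, Pi.star_apply, star_mul']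
  ring

end PureMat

section Kronecker

variable {ι κ l m n p R : Type*} [Fintype ι] [Fintype κ]

lemma sum_kronecker_sum [NonUnitalNonAssocSemiring R] (A : ι → Matrix l m R)
    (B : κ → Matrix n p R) :
    (∑ i, A i) ⊗ₖ (∑ j, B j) = ∑ i, ∑ j, A i ⊗ₖ B j := by
  ext a b
  simp only [kroneckerMap_apply, Matrix.sum_apply, Finset.sum_mul_sum]

lemma sum_kronecker_self_of_transpose_mul_self [CommSemiring R] [DecidableEq κ]
    {C : Matrix ι κ R} {c : R} (hC : Cᵀ * C = c • 1) (B : κ → Matrix m n R) :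
    ∑ i, (∑ μ, C i μ • B μ) ⊗ₖ (∑ ν, C i ν • B ν) = c • ∑ μ, B μ ⊗ₖ B μ := by
  have orthogonality (μ ν : κ) : ∑ i, C i μ * C i ν = if μ = ν then c else 0 := by
    simpa [mul_apply, one_apply] using congrFun₂ hC μ ν
  calc ∑ i, (∑ μ, C i μ • B μ) ⊗ₖ (∑ ν, C i ν • B ν)
      = ∑ i, ∑ μ, ∑ ν, (C i μ * C i ν) • B μ ⊗ₖ B ν := by
        simp only [sum_kronecker_sum, smul_kronecker, kronecker_smul, smul_smul, mul_comm]
    _ = ∑ μ, ∑ ν, (∑ i, C i μ * C i ν) • B μ ⊗ₖ B ν := by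
        simp only [Finset.sum_smul]
        rw [Finset.sum_comm]
        exact Finset.sum_congr rfl fun μ _ => Finset.sum_comm
    _ = c • ∑ μ, B μ ⊗ₖ B μ := by
        simp only [orthogonality, ite_smul, zero_smul, Finset.sum_ite_eq, Finset.mem_univ, if_true,
          Finset.smul_sum]

end Kronecker

section SeparableCone

variable {m n : Type*}

/-- The cone of unnormalised separable states of a bipartite system whose parts have bases indexed
by `m` and `n`: nonnegative combinations of product projectors `x x† ⊗ y y†`. -/
def separableCone (m n : Type*) : PointedCone ℝ (Matrix (m × n) (m × n) ℂ) :=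
  PointedCone.hull ℝ (Set.range fun v : (m → ℂ) × (n → ℂ) => pureMat v.1 ⊗ₖ pureMat v.2)

lemma pureMat_kronecker_pureMat_mem_separableCone (x : m → ℂ) (y : n → ℂ) :
    pureMat x ⊗ₖ pureMat y ∈ separableCone m n :=
  PointedCone.subset_hull ⟨(x, y), rfl⟩

lemma mem_separableCone_iff {X : Matrix (m × n) (m × n) ℂ} :
    X ∈ separableCone m n ↔
      ∃ (k : ℕ) (x : Fin k → m → ℂ) (y : Fin k → n → ℂ),
        X = ∑ i, pureMat (x i) ⊗ₖ pureMat (y i) := by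
  constructor
  · intro hX
    obtain ⟨k, c, g, rfl⟩ := Submodule.mem_span_set'.mp hX
    choose v hv using fun i => (g i).2
    refine ⟨k, fun i => (√(c i : ℝ) : ℂ) • (v i).1, fun i => (v i).2, ?_⟩
    refine Finset.sum_congr rfl fun i _ => ?_
    rw [pureMat_sqrt_smul (c i).2, smul_kronecker, ← hv i]
    rfl
  · rintro ⟨k, x, y, rfl⟩
    exact Submodule.sum_mem _ fun i _ => pureMat_kronecker_pureMat_mem_separableCone (x i) (y i)

lemma kronecker_mul_mul_conjTranspose_mem_separableCone [Fintype m] [Fintype n]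
    (A : Matrix m m ℂ) (B : Matrix n n ℂ) {X : Matrix (m × n) (m × n) ℂ}
    (hX : X ∈ separableCone m n) : (A ⊗ₖ B) * X * (A ⊗ₖ B)ᴴ ∈ separableCone m n := by
  obtain ⟨k, x, y, rfl⟩ := mem_separableCone_iff.mp hX
  refine mem_separableCone_iff.mpr ⟨k, fun i => A *ᵥ x i, fun i => B *ᵥ y i, ?_⟩
  simp only [pureMat_mulVec, mul_kronecker_mul, conjTranspose_kronecker, Finset.mul_sum,
    Finset.sum_mul]

end SeparableCone

section SepAB

lemma sepAB_iff_mem_separableCone {ρ : M16} :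
    SepAB ρ ↔ reindex swapMid swapMid ρ ∈ separableCone Q2 Q2 :=
  mem_separableCone_iff.symm

lemma convex_setOf_sepAB : Convex ℝ {ρ : M16 | SepAB ρ} := by
  simp only [sepAB_iff_mem_separableCone]
  exact ((separableCone Q2 Q2).comap (reindexLinearEquiv ℝ ℂ swapMid swapMid).toLinearMap).convex

lemma SepAB.smul {ρ : M16} (hρ : SepAB ρ) {c : ℝ} (hc : 0 ≤ c) : SepAB (c • ρ) := by
  rw [sepAB_iff_mem_separableCone] at hρ ⊢
  exact (separableCone Q2 Q2).smul_mem hc hρ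

lemma reindex_swapMid_kronecker {R : Type*} [CommSemigroup R]
    (A B C D : Matrix (Fin 2) (Fin 2) R) :
    reindex swapMid swapMid ((A ⊗ₖ B) ⊗ₖ (C ⊗ₖ D)) = (A ⊗ₖ C) ⊗ₖ (B ⊗ₖ D) := by
  ext p q
  exact mul_mul_mul_comm _ _ _ _

lemma SepAB.local_conj {ρ : M16} (hρ : SepAB ρ) (A B C D : Matrix (Fin 2) (Fin 2) ℂ) :
    SepAB (((A ⊗ₖ B) ⊗ₖ (C ⊗ₖ D)) * ρ * ((A ⊗ₖ B) ⊗ₖ (C ⊗ₖ D))ᴴ) := by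
  rw [sepAB_iff_mem_separableCone] at hρ ⊢
  have := kronecker_mul_mul_conjTranspose_mem_separableCone (A ⊗ₖ C) (B ⊗ₖ D) hρ
  rw [← reindex_swapMid_kronecker] at this
  simpa only [reindex_apply, conjTranspose_submatrix, submatrix_mul_equiv] using this

lemma sepAB_kronecker {X Y : M4} (hX : X ∈ separableCone (Fin 2) (Fin 2))
    (hY : Y ∈ separableCone (Fin 2) (Fin 2)) : SepAB (X ⊗ₖ Y) := by
  obtain ⟨k, x, y, rfl⟩ := mem_separableCone_iff.mp hX
  obtain ⟨l, z, w, rfl⟩ := mem_separableCone_iff.mp hY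
  rw [sepAB_iff_mem_separableCone, sum_kronecker_sum, ← coe_reindexLinearEquiv ℂ ℂ]
  simp only [map_sum]
  refine Submodule.sum_mem _ fun i _ => Submodule.sum_mem _ fun j _ => ?_
  rw [coe_reindexLinearEquiv, reindex_swapMid_kronecker, pureMat_kronecker_pureMat,
    pureMat_kronecker_pureMat]
  exact pureMat_kronecker_pureMat_mem_separableCone _ _

end SepAB

section LocalPermutations

variable {ι m n : Type*} [Fintype m] [Fintype n] [DecidableEq m] [DecidableEq n]

/-- The permutations of a family `P` of bipartite matrices that are implemented by conjugation with
a local operator `U ⊗ V`. -/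
def localPermutations (P : ι → Matrix (m × n) (m × n) ℂ) : Submonoid (Equiv.Perm ι) where
  carrier := {σ | ∃ (U : Matrix m m ℂ) (V : Matrix n n ℂ),
    ∀ i, P (σ i) = (U ⊗ₖ V) * P i * (U ⊗ₖ V)ᴴ}
  one_mem' := ⟨1, 1, fun i => by simp⟩
  mul_mem' := by
    rintro σ τ ⟨U, V, hσ⟩ ⟨U', V', hτ⟩
    refine ⟨U * U', V * V', fun i => ?_⟩
    rw [Equiv.Perm.mul_apply, hσ, hτ, mul_kronecker_mul, conjTranspose_mul]
    simp only [Matrix.mul_assoc]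

lemma mem_localPermutations_pureMat {x : ι → m × n → ℂ} {σ : Equiv.Perm ι} (U : Matrix m m ℂ)
    (V : Matrix n n ℂ) (phase : ι → ℂ) (norm_phase : ∀ i, ‖phase i‖ = 1)
    (h : ∀ i, (U ⊗ₖ V) *ᵥ x i = phase i • x (σ i)) :
    σ ∈ localPermutations fun i => pureMat (x i) := by
  refine ⟨U, V, fun i => ?_⟩
  rw [← pureMat_mulVec, h, pureMat_smul, norm_phase, one_pow, one_smul]

end LocalPermutations

section Bell

lemma invSqrt2_mul_self : invSqrt2 * invSqrt2 = 1 / 2 := by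
  rw [invSqrt2, ← Complex.ofReal_mul, ← mul_inv, Real.mul_self_sqrt zero_le_two]
  norm_num

lemma conj_invSqrt2 : (starRingEnd ℂ) invSqrt2 = invSqrt2 :=
  Complex.conj_ofReal _

lemma swap_zero_one_mem_localPermutations : Equiv.swap 0 1 ∈ localPermutations BellProj := by
  refine mem_localPermutations_pureMat !![1, 0; 0, I] !![1, 0; 0, I] ![1, 1, I, I] ?_ ?_
  · intro i
    fin_cases i <;> simp
  · intro i
    ext ⟨a, b⟩
    fin_cases i <;> fin_cases a <;> fin_cases b <;>
      simp [bell, mulVec, dotProduct, Fintype.sum_prod_type, Equiv.swap_apply_def]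

lemma swap_one_two_mem_localPermutations : Equiv.swap 1 2 ∈ localPermutations BellProj := by
  let hadamard := !![invSqrt2, invSqrt2; invSqrt2, -invSqrt2]
  refine mem_localPermutations_pureMat hadamard hadamard ![1, 1, 1, -1] ?_ ?_
  · intro i
    fin_cases i <;> simp
  · intro i
    ext ⟨a, b⟩
    fin_cases i <;> fin_cases a <;> fin_cases b <;>
      simp [hadamard, bell, mulVec, dotProduct, Fintype.sum_prod_type, Equiv.swap_apply_def,
        invSqrt2_mul_self] <;>
      ring

lemma swap_two_three_mem_localPermutations : Equiv.swap 2 3 ∈ localPermutations BellProj := by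
  refine mem_localPermutations_pureMat !![1, 0; 0, I] !![1, 0; 0, -I] ![1, 1, -I, -I] ?_ ?_
  · intro i
    fin_cases i <;> simp
  · intro i
    ext ⟨a, b⟩
    fin_cases i <;> fin_cases a <;> fin_cases b <;>
      simp [bell, mulVec, dotProduct, Fintype.sum_prod_type, Equiv.swap_apply_def]

lemma localPermutations_bellProj : localPermutations BellProj = ⊤ := by
  rw [eq_top_iff, ← Equiv.Perm.mclosure_swap_castSucc_succ, Submonoid.closure_le]
  rintro _ ⟨i, rfl⟩
  fin_cases i
  · exact swap_zero_one_mem_localPermutations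
  · exact swap_one_two_mem_localPermutations
  · exact swap_two_three_mem_localPermutations

/-- The Pauli basis `1, σ_x, σ_y, σ_z` of the 2×2 matrices. -/
def pauliBasis : Fin 4 → Matrix (Fin 2) (Fin 2) ℂ := vecCons 1 pauli

/-- The coefficients of the Bell projectors (rows) along `σ_μ ⊗ σ_μ` (columns), the `σ_μ` being
those of `pauliBasis`. -/
def bellPauliCoeff : Matrix (Fin 4) (Fin 4) ℂ :=
  (1 / 4 : ℂ) • !![1, 1, -1, 1; 1, -1, 1, 1; 1, 1, 1, -1; 1, -1, -1, -1]

lemma bellPauliCoeff_transpose_mul_self :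
    bellPauliCoeffᵀ * bellPauliCoeff = (1 / 4 : ℂ) • 1 := by
  ext μ ν
  fin_cases μ <;> fin_cases ν <;>
    simp [bellPauliCoeff, mul_apply, Fin.sum_univ_four] <;>
    norm_num

lemma bellProj_eq_sum_pauliBasis (i : Fin 4) :
    BellProj i = ∑ μ, bellPauliCoeff i μ • (pauliBasis μ ⊗ₖ pauliBasis μ) := by
  ext ⟨a, b⟩ ⟨c, d⟩
  fin_cases i <;> fin_cases a <;> fin_cases b <;> fin_cases c <;> fin_cases d <;>
    simp [BellProj, bell, vecMulVec_apply, conj_invSqrt2, invSqrt2_mul_self, bellPauliCoeff,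
      pauliBasis, pauli, Fin.sum_univ_four] <;>
    norm_num

lemma sum_bellProj_kronecker_self :
    ∑ i, BellProj i ⊗ₖ BellProj i = (1 / 4 : ℂ) •
      ∑ μ, (pauliBasis μ ⊗ₖ pauliBasis μ) ⊗ₖ (pauliBasis μ ⊗ₖ pauliBasis μ) := by
  simp only [bellProj_eq_sum_pauliBasis]
  exact sum_kronecker_self_of_transpose_mul_self bellPauliCoeff_transpose_mul_self _

lemma reindex_swapMid_sum_bellProj_kronecker_self :
    reindex swapMid swapMid (∑ i, BellProj i ⊗ₖ BellProj i) = ∑ i, BellProj i ⊗ₖ BellProj i := by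
  rw [sum_bellProj_kronecker_self, ← coe_reindexLinearEquiv ℂ ℂ]
  simp only [map_smul, map_sum, coe_reindexLinearEquiv, reindex_swapMid_kronecker]

lemma sepAB_sum_bellProj_kronecker_self : SepAB (∑ i, BellProj i ⊗ₖ BellProj i) :=
  ⟨4, bell, bell, reindex_swapMid_sum_bellProj_kronecker_self⟩

lemma bellProj_zero_add_bellProj_one :
    BellProj 0 + BellProj 1 =
      ∑ a : Fin 2, pureMat (Pi.single a 1) ⊗ₖ pureMat (Pi.single a 1) := by
  ext ⟨a, b⟩ ⟨c, d⟩
  fin_cases a <;> fin_cases b <;> fin_cases c <;> fin_cases d <;>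
    norm_num [BellProj, bell, pureMat, vecMulVec_apply, conj_invSqrt2, invSqrt2_mul_self]

lemma bellProj_zero_add_bellProj_one_mem_separableCone :
    BellProj 0 + BellProj 1 ∈ separableCone (Fin 2) (Fin 2) := by
  rw [bellProj_zero_add_bellProj_one]
  exact Submodule.sum_mem _ fun a _ => pureMat_kronecker_pureMat_mem_separableCone _ _

end Bell

section BellDiagonal

/-- The two-pair Bell-diagonal matrix `∑ᵢⱼ rᵢⱼ Πᵢ ⊗ Πⱼ`, as a linear function of the weights `r`. -/
def bellDiagonal : Matrix (Fin 4) (Fin 4) ℝ →ₗ[ℝ] M16 where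
  toFun r := ∑ i, ∑ j, (r i j : ℂ) • (BellProj i ⊗ₖ BellProj j)
  map_add' r s := by
    simp only [Matrix.add_apply, Complex.ofReal_add, add_smul, Finset.sum_add_distrib]
  map_smul' c r := by
    simp only [Matrix.smul_apply, smul_eq_mul, Complex.ofReal_mul, mul_smul, Complex.coe_smul,
      Finset.smul_sum, RingHom.id_apply]

lemma bellDiagonal_apply (r : Matrix (Fin 4) (Fin 4) ℝ) :
    bellDiagonal r = ∑ i, ∑ j, (r i j : ℂ) • (BellProj i ⊗ₖ BellProj j) :=
  rfl

lemma bellDiagonal_submatrix (r : Matrix (Fin 4) (Fin 4) ℝ) (σ τ : Equiv.Perm (Fin 4)) :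
    bellDiagonal (r.submatrix σ τ) =
      ∑ i, ∑ j, (r i j : ℂ) • (BellProj (σ⁻¹ i) ⊗ₖ BellProj (τ⁻¹ j)) := by
  rw [bellDiagonal_apply]
  refine Fintype.sum_equiv σ _ _ fun i => Fintype.sum_equiv τ _ _ fun j => ?_
  simp only [submatrix_apply, Equiv.Perm.inv_def, Equiv.symm_apply_apply]

lemma sepAB_bellDiagonal_submatrix {r : Matrix (Fin 4) (Fin 4) ℝ} (hr : SepAB (bellDiagonal r))
    (σ τ : Equiv.Perm (Fin 4)) : SepAB (bellDiagonal (r.submatrix σ τ)) := by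
  have mem_local (π : Equiv.Perm (Fin 4)) : π ∈ localPermutations BellProj :=
    localPermutations_bellProj ▸ Submonoid.mem_top π
  obtain ⟨A, B, hσ⟩ := mem_local σ⁻¹
  obtain ⟨C, D, hτ⟩ := mem_local τ⁻¹
  rw [bellDiagonal_submatrix]
  simpa only [hσ, hτ, bellDiagonal_apply, mul_kronecker_mul, conjTranspose_kronecker (A ⊗ₖ B),
    Finset.mul_sum, Finset.sum_mul, Matrix.mul_smul, Matrix.smul_mul] using hr.local_conj A B C D

lemma bellDiagonal_D0 : bellDiagonal D0 = (1 / 4 : ℝ) • ∑ i, BellProj i ⊗ₖ BellProj i := by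
  have bellDiagonal_one : bellDiagonal 1 = ∑ i, BellProj i ⊗ₖ BellProj i := by
    simp [bellDiagonal_apply, one_apply]
  rw [D0, map_smul, bellDiagonal_one]

lemma bellDiagonal_G0 :
    bellDiagonal G0 =
      (1 / 4 : ℝ) • ((BellProj 0 + BellProj 1) ⊗ₖ (BellProj 0 + BellProj 1)) := by
  rw [bellDiagonal_apply, add_kronecker, kronecker_add, kronecker_add]
  simp [G0, Fin.sum_univ_four, ← Complex.coe_smul]

lemma sepAB_bellDiagonal_D0 : SepAB (bellDiagonal D0) := by
  rw [bellDiagonal_D0]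
  exact sepAB_sum_bellProj_kronecker_self.smul (by norm_num)

lemma sepAB_bellDiagonal_G0 : SepAB (bellDiagonal G0) := by
  have separable_pair := bellProj_zero_add_bellProj_one_mem_separableCone
  rw [bellDiagonal_G0]
  exact (sepAB_kronecker separable_pair separable_pair).smul (by norm_num)

end BellDiagonal

/-- if `r ∈ 𝒫_s`, then `ρ = Σ_{ij} r_{ij} Π_i⊗Π_j` is separable across
the partition A = (A',A''), B = (B',B''). -/
theorem stmt9 (r : Matrix (Fin 4) (Fin 4) ℝ) (hr : r ∈ Ps) :
    SepAB (∑ i, ∑ j, (r i j : ℂ) • (BellProj i ⊗ₖ BellProj j)) := by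
  have convex_weights : Convex ℝ {r | SepAB (bellDiagonal r)} :=
    convex_setOf_sepAB.linear_preimage bellDiagonal
  refine convexHull_min ?_ convex_weights hr
  rintro _ ⟨σ, τ, rfl | rfl⟩
  · exact sepAB_bellDiagonal_submatrix sepAB_bellDiagonal_D0 σ τ
  · exact sepAB_bellDiagonal_submatrix sepAB_bellDiagonal_G0 σ τ

end Paper
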